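/- Commutator estimate: let k ≥ 1 be an integer and define the commutator [∇ᵏ, f]g = ∇ᵏ(fg) − f∇ᵏg. Then there exists a constant C > 0, depending only on k, such that for all Schwartz functions f, g on ℝ³ one has ‖[∇ᵏ, f]g‖_{L²} ≤ C‖∇f‖_{L^∞}‖∇^{k−1}g‖_{L²} + C‖∇ᵏf‖_{L²}‖g‖_{L^∞}. -/

import Mathlib

open MeasureTheory Real Filter
open scoped ENNReal Topology FourierTransform ComplexConjugate ContDiff

noncomputable section

/-- Three-dimensional Euclidean space `ℝ³`. -/
abbrev E3 : Type := EuclideanSpace ℝ (Fin 3)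

/-- The `i`-th partial derivative of a scalar field on `ℝ³`. -/
def pd (i : Fin 3) (f : E3 → ℝ) (x : E3) : ℝ :=
  fderiv ℝ f x (EuclideanSpace.single i 1)

/-- The divergence of a vector field on `ℝ³`. -/
def vdiv (u : E3 → E3) (x : E3) : ℝ :=
  ∑ i, fderiv ℝ u x (EuclideanSpace.single i 1) i

/-- The Laplacian of a scalar field on `ℝ³`. -/
def lap (f : E3 → ℝ) (x : E3) : ℝ :=
  ∑ i, pd i (pd i f) x

/-- The `L^p` norm (as a real number) of a function on `ℝ³`. -/
def LpN {F : Type*} [NormedAddCommGroup F] (p : ℝ≥0∞) (f : E3 → F) : ℝ :=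
  (eLpNorm f p volume).toReal

/-- `‖∇ᵏf‖_{L^p}`: the `L^p` norm of the `k`-th order spatial derivatives. -/
def DN {F : Type*} [NormedAddCommGroup F] [NormedSpace ℝ F] (p : ℝ≥0∞) (k : ℕ)
    (f : E3 → F) : ℝ :=
  (eLpNorm (iteratedFDeriv ℝ k f) p volume).toReal

/-- `‖∇ᵏf‖_{H^m}²`: the square of the Sobolev norm of the `k`-th order derivatives. -/
def SobSq {F : Type*} [NormedAddCommGroup F] [NormedSpace ℝ F] (k m : ℕ)
    (f : E3 → F) : ℝ :=
  ∑ j ∈ Finset.range (m + 1), (DN 2 (k + j) f) ^ 2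

/-- `‖∇ᵏf‖_{H^m}`: the Sobolev norm of the `k`-th order derivatives. -/
def SobN {F : Type*} [NormedAddCommGroup F] [NormedSpace ℝ F] (k m : ℕ)
    (f : E3 → F) : ℝ :=
  Real.sqrt (SobSq k m f)

/-!
At a point `x` the commutator `[∇ᵏ, f]g` is `∇ᵏ((f - f(x)) g)`, so every term of its Leibniz
expansion carries at least one derivative of `f`. Put `m = k - 1`; Hölder's inequality bounds the
`i`-th term by `cᵢ = ‖∇ⁱ⁺¹f‖_{pm/i} ‖∇ᵐ⁻ⁱg‖_{pm/(m-i)}`. Integrating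
`|∂ₑv|ˢ = ∂ₑv · |∂ₑv|ˢ⁻² ∂ₑv` by parts gives the Gagliardo–Nirenberg inequality
`‖∇v‖ₛ² ≲ ‖v‖_q ‖∇²v‖_r` for `1/q + 1/r = 2/s`. Applied to the derivatives of `f` and `g`, it makes
`cᵢ` log-convex in `i` up to a constant, so `cᵢ` is controlled by its values `‖∇f‖_∞ ‖∇ᵐg‖_p` and
`‖∇ᵐ⁺¹f‖_p ‖g‖_∞` at the two ends.
-/

open Module
open scoped SchwartzMap LineDeriv

section PowerInequalities

lemma holderTriple_div {a b c t : ℝ≥0∞} (ht : t ≠ 0) (ht' : t ≠ ⊤) (h : a + b = c) :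
    ENNReal.HolderTriple (t / a) (t / b) (t / c) where
  inv_add_inv_eq_inv := by
    simp only [ENNReal.inv_div (Or.inr ht') (Or.inr ht), ← ENNReal.add_div, h]

lemma holderTriple_div_div {a b c d t : ℝ≥0∞} (ht : t ≠ 0) (ht' : t ≠ ⊤) (hc : c ≠ 0 ∨ d ≠ ⊤)
    (hd : c ≠ ⊤ ∨ d ≠ 0) (h : a + b = c * d) :
    ENNReal.HolderTriple (t / a) (t / b) (t / c / d) := by
  rw [div_eq_mul_inv (t / c), div_eq_mul_inv t c, mul_assoc, ← ENNReal.mul_inv hc hd,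
    ← div_eq_mul_inv]
  exact holderTriple_div ht ht' h

lemma sq_le_of_rpow_le_rpow_mul {a b : ℝ≥0∞} {p : ℝ} (hp : 2 ≤ p) (ha : a ≠ ⊤)
    (h : a ^ p ≤ a ^ (p - 2) * b) : a ^ 2 ≤ b := by
  rcases eq_or_ne a 0 with rfl | ha0
  · simp
  rw [← sub_add_cancel p 2, ENNReal.rpow_add _ _ ha0 ha, sub_add_cancel, ENNReal.rpow_two] at h
  exact (ENNReal.mul_le_mul_iff_right (by simp [ha0, ha])
    (ENNReal.rpow_ne_top_of_nonneg (sub_nonneg.2 hp) ha)).1 h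

variable {R : Type*} [CommRing R] [LinearOrder R] [IsStrictOrderedRing R]

lemma le_max_of_sq_succ_le_mul {c : ℕ → R} (hc : ∀ i, 0 ≤ c i) {m : ℕ}
    (h : ∀ i, i + 1 < m → c (i + 1) ^ 2 ≤ c i * c (i + 2)) {i : ℕ} (hi : i ≤ m) :
    c i ≤ max (c 0) (c m) := by
  induction m generalizing i with
  | zero => simp [Nat.le_zero.1 hi]
  | succ m ih =>
    rcases hi.eq_or_lt with rfl | hi
    · exact le_max_right _ _
    have hbelow : ∀ {j}, j ≤ m → c j ≤ max (c 0) (c m) := ih fun j hj => h j (by omega)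
    suffices hm : c m ≤ max (c 0) (c (m + 1)) from
      (hbelow (Nat.lt_succ_iff.1 hi)).trans (max_le (le_max_left _ _) hm)
    rcases m with _ | m
    · exact le_max_left _ _
    by_contra! hlt
    obtain ⟨h0, h1⟩ := max_lt_iff.1 hlt
    have hpos : 0 < c (m + 1) := (hc 0).trans_lt h0
    have hprev : c m ≤ c (m + 1) := by simpa [h0.le] using hbelow m.le_succ
    refine lt_irrefl (c (m + 1) ^ 2) ?_
    calc c (m + 1) ^ 2 ≤ c m * c (m + 2) := h m (by omega)
      _ ≤ c (m + 1) * c (m + 2) := mul_le_mul_of_nonneg_right hprev (hc (m + 2))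
      _ < c (m + 1) * c (m + 1) := mul_lt_mul_of_pos_left h1 hpos
      _ = c (m + 1) ^ 2 := (sq _).symm

-- The weights `K ^ i ^ 2` absorb the constant since `2 * (i + 1) ^ 2 + 1 ≤ i ^ 2 + (i + 2) ^ 2`.
lemma le_pow_mul_max_of_sq_succ_le_mul {c : ℕ → R} (hc : ∀ i, 0 ≤ c i) {K : R} (hK : 1 ≤ K)
    {m : ℕ} (h : ∀ i, i + 1 < m → c (i + 1) ^ 2 ≤ K * (c i * c (i + 2))) {i : ℕ} (hi : i ≤ m) :
    c i ≤ K ^ m ^ 2 * max (c 0) (c m) := by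
  have hK0 : 0 ≤ K := zero_le_one.trans hK
  have hweighted : ∀ i, i + 1 < m →
      (K ^ (i + 1) ^ 2 * c (i + 1)) ^ 2 ≤ K ^ i ^ 2 * c i * (K ^ (i + 2) ^ 2 * c (i + 2)) := by
    intro i hi
    have hcc : 0 ≤ c i * c (i + 2) := mul_nonneg (hc i) (hc (i + 2))
    calc (K ^ (i + 1) ^ 2 * c (i + 1)) ^ 2
        = (K ^ (i + 1) ^ 2) ^ 2 * c (i + 1) ^ 2 := mul_pow _ _ _
      _ ≤ (K ^ (i + 1) ^ 2) ^ 2 * (K * (c i * c (i + 2))) := by gcongr; exact h i hi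
      _ = K ^ ((i + 1) ^ 2 * 2 + 1) * (c i * c (i + 2)) := by
          rw [pow_succ K, pow_mul, mul_assoc]
      _ ≤ K ^ (i ^ 2 + (i + 2) ^ 2) * (c i * c (i + 2)) :=
          mul_le_mul_of_nonneg_right (pow_le_pow_right₀ hK (by nlinarith)) hcc
      _ = K ^ i ^ 2 * c i * (K ^ (i + 2) ^ 2 * c (i + 2)) := by rw [pow_add, mul_mul_mul_comm]
  calc c i ≤ K ^ i ^ 2 * c i := le_mul_of_one_le_left (hc i) (one_le_pow₀ hK)
    _ ≤ max (K ^ 0 ^ 2 * c 0) (K ^ m ^ 2 * c m) :=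
        le_max_of_sq_succ_le_mul (c := fun i => K ^ i ^ 2 * c i)
          (fun i => mul_nonneg (pow_nonneg hK0 _) (hc i)) hweighted hi
    _ ≤ max (K ^ m ^ 2 * c 0) (K ^ m ^ 2 * c m) := by
        gcongr max (?_ * _) _
        · exact hc 0
        · exact pow_le_pow_right₀ hK (by simp)
    _ = K ^ m ^ 2 * max (c 0) (c m) := (mul_max_of_nonneg _ _ (pow_nonneg hK0 _)).symm

end PowerInequalities

section OrthonormalBasis

lemma opNorm_le_sum_norm_apply_orthonormalBasis {𝕜 E F ι κ : Type*} [RCLike 𝕜]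
    [NormedAddCommGroup E] [InnerProductSpace 𝕜 E] [NormedAddCommGroup F] [NormedSpace 𝕜 F]
    [Fintype ι] [Fintype κ] [DecidableEq κ] (b : OrthonormalBasis ι 𝕜 E)
    (A : ContinuousMultilinearMap 𝕜 (fun _ : κ => E) F) :
    ‖A‖ ≤ ∑ L : κ → ι, ‖A fun j => b (L j)‖ := by
  refine A.opNorm_le_bound (Finset.sum_nonneg fun _ _ => norm_nonneg _) fun m => ?_
  have hexpand : A m = ∑ L : κ → ι, (∏ j, b.repr (m j) (L j)) • A fun j => b (L j) := by
    conv_lhs => rw [← funext fun j => b.sum_repr (m j)]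
    rw [A.map_sum]
    exact Finset.sum_congr rfl fun L _ => A.map_smul_univ _ _
  rw [hexpand, Finset.sum_mul]
  refine norm_sum_le_of_le _ fun L _ => ?_
  rw [norm_smul, mul_comm, norm_prod]
  gcongr with j
  simpa using PiLp.norm_apply_le (b.repr (m j)) (L j)

end OrthonormalBasis

section Leibniz

lemma norm_iteratedFDeriv_smul_sub_smul_le {𝕜 E F : Type*} [NontriviallyNormedField 𝕜]
    [NormedAddCommGroup E] [NormedSpace 𝕜 E] [NormedAddCommGroup F] [NormedSpace 𝕜 F]
    {f : E → 𝕜} {g : E → F} {m : ℕ} (hf : ContDiff 𝕜 (m + 1 : ℕ) f)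
    (hg : ContDiff 𝕜 (m + 1 : ℕ) g) (x : E) :
    ‖iteratedFDeriv 𝕜 (m + 1) (fun y => f y • g y) x - f x • iteratedFDeriv 𝕜 (m + 1) g x‖ ≤
      ∑ i ∈ Finset.range (m + 1), ((m + 1).choose (i + 1) : ℝ) *
        (‖iteratedFDeriv 𝕜 (i + 1) f x‖ * ‖iteratedFDeriv 𝕜 (m - i) g x‖) := by
  set c := f x with hc
  have hfc : ContDiff 𝕜 (m + 1 : ℕ) fun y => f y - c := hf.sub contDiff_const
  have hcomm : iteratedFDeriv 𝕜 (m + 1) (fun y => (f y - c) • g y) x =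
      iteratedFDeriv 𝕜 (m + 1) (fun y => f y • g y) x - c • iteratedFDeriv 𝕜 (m + 1) g x := by
    rw [funext fun y => sub_smul (f y) c (g y), ← iteratedFDeriv_const_smul_apply hg.contDiffAt]
    exact iteratedFDeriv_sub_apply (hf.smul hg).contDiffAt (hg.const_smul c).contDiffAt
  have hsucc (i : ℕ) (hi : i ∈ Finset.range (m + 1)) :
      iteratedFDeriv 𝕜 (i + 1) (fun y => f y - c) x = iteratedFDeriv 𝕜 (i + 1) f x := by
    have hfi : ContDiff 𝕜 (i + 1 : ℕ) f := hf.of_le (by exact_mod_cast Finset.mem_range.1 hi)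
    rw [show (fun y => f y - c) = f - fun _ => c from rfl,
      iteratedFDeriv_sub_apply hfi.contDiffAt contDiff_const.contDiffAt,
      iteratedFDeriv_const_of_ne i.succ_ne_zero]
    simp
  have hleibniz := norm_iteratedFDeriv_smul_le hfc hg x le_rfl
  rw [hcomm, Finset.sum_range_succ', norm_iteratedFDeriv_zero, hc, sub_self, norm_zero, mul_zero,
    zero_mul, add_zero] at hleibniz
  refine hleibniz.trans_eq (Finset.sum_congr rfl fun i hi => ?_)
  rw [hsucc i hi, mul_assoc, Nat.add_sub_add_right]

variable {E F : Type*} [NormedAddCommGroup E] [NormedSpace ℝ E] [SecondCountableTopology E]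
  [MeasurableSpace E] [OpensMeasurableSpace E] [NormedAddCommGroup F] [NormedSpace ℝ F]
  {μ : Measure E}

lemma aestronglyMeasurable_iteratedFDeriv (f : 𝓢(E, F)) (n : ℕ) :
    AEStronglyMeasurable (iteratedFDeriv ℝ n f) μ :=
  ((f.smooth n).continuous_iteratedFDeriv le_rfl).aestronglyMeasurable

lemma eLpNorm_iteratedFDeriv_smul_sub_smul_le {p : ℝ≥0∞} (hp : 1 ≤ p) (f : 𝓢(E, ℝ))
    (g : 𝓢(E, F)) (m : ℕ) :
    eLpNorm (fun x => iteratedFDeriv ℝ (m + 1) (fun y => f y • g y) x -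
        f x • iteratedFDeriv ℝ (m + 1) g x) p μ ≤
      ∑ i ∈ Finset.range (m + 1), (m + 1).choose (i + 1) *
        eLpNorm (fun x => ‖iteratedFDeriv ℝ (i + 1) f x‖ * ‖iteratedFDeriv ℝ (m - i) g x‖) p μ := by
  set φ : ℕ → E → ℝ := fun i x =>
    ‖iteratedFDeriv ℝ (i + 1) f x‖ * ‖iteratedFDeriv ℝ (m - i) g x‖ with hφ
  have hmeas (i : ℕ) : AEStronglyMeasurable (φ i) μ :=
    (aestronglyMeasurable_iteratedFDeriv f _).norm.mul
      (aestronglyMeasurable_iteratedFDeriv g _).norm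
  calc _ ≤ eLpNorm (∑ i ∈ Finset.range (m + 1), ((m + 1).choose (i + 1) : ℝ) • φ i) p μ :=
        eLpNorm_mono_real fun x => by
          simpa [hφ] using norm_iteratedFDeriv_smul_sub_smul_le (f.smooth _) (g.smooth _) x
    _ ≤ ∑ i ∈ Finset.range (m + 1), eLpNorm (((m + 1).choose (i + 1) : ℝ) • φ i) p μ :=
        eLpNorm_sum_le (fun i _ => (hmeas i).const_smul _) hp
    _ = ∑ i ∈ Finset.range (m + 1), (m + 1).choose (i + 1) * eLpNorm (φ i) p μ :=
        Finset.sum_congr rfl fun i _ => by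
          rw [eLpNorm_const_smul, Real.enorm_natCast]

end Leibniz

section WeightedIntegrals

lemma hasDerivAt_abs_rpow_mul_self {s : ℝ} (hs : 0 < s) (t : ℝ) :
    HasDerivAt (fun t : ℝ => |t| ^ s * t) ((s + 1) * |t| ^ s) t := by
  rcases eq_or_ne t 0 with rfl | ht
  · have hcont : Tendsto (fun t : ℝ => |t| ^ s) (𝓝 0) (𝓝 (|0| ^ s)) :=
      (continuous_abs.rpow_const fun _ => Or.inr hs.le).tendsto 0
    rw [hasDerivAt_iff_tendsto_slope]
    simp only [abs_zero, Real.zero_rpow hs.ne', mul_zero] at hcont ⊢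
    refine (hcont.mono_left nhdsWithin_le_nhds).congr' ?_
    filter_upwards [self_mem_nhdsWithin] with y (hy : y ≠ 0)
    simp [slope_def_field, hy]
  · have hpow : HasDerivAt (fun t : ℝ => |t| ^ s) (SignType.sign t * s * |t| ^ (s - 1)) t :=
      (hasDerivAt_abs ht).rpow_const (Or.inl (abs_ne_zero.2 ht))
    refine (hpow.mul (hasDerivAt_id t)).congr_deriv ?_
    have habs : |t| ^ s = |t| ^ (s - 1) * (SignType.sign t * t) := by
      rw [sign_mul_self, ← Real.rpow_add_one (abs_ne_zero.2 ht), sub_add_cancel]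
    simp only [id, habs]
    ring

lemma eLpNorm_norm_rpow_mul_mul_le {α : Type*} [MeasurableSpace α] {μ : Measure α}
    {u v w : α → ℝ} (hu : AEStronglyMeasurable u μ) (hv : AEStronglyMeasurable v μ)
    (hw : AEStronglyMeasurable w μ) {p q r : ℝ≥0∞} (hp : 2 < p) (hp_top : p ≠ ⊤)
    [ENNReal.HolderTriple q r (p / 2)] :
    eLpNorm (fun x => |u x| ^ (p.toReal - 2) * (v x * w x)) 1 μ ≤
      eLpNorm u p μ ^ (p.toReal - 2) * (eLpNorm v q μ * eLpNorm w r μ) := by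
  set s := p.toReal - 2 with hs_def
  have hp0 : p ≠ 0 := (zero_lt_two.trans hp).ne'
  have hs : 0 < s := sub_pos.2 (by simpa using ENNReal.toReal_strict_mono hp_top hp)
  have hs_add : ENNReal.ofReal s + 2 = p := by
    rw [hs_def, ENNReal.ofReal_sub _ zero_le_two, ENNReal.ofReal_toReal hp_top,
      ENNReal.ofReal_ofNat, tsub_add_cancel_of_le hp.le]
  have hs0 : ENNReal.ofReal s ≠ 0 := (ENNReal.ofReal_pos.2 hs).ne'
  have hweight : ENNReal.HolderTriple (p / ENNReal.ofReal s) (p / 2) 1 := by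
    simpa [ENNReal.div_self hp0 hp_top] using holderTriple_div hp0 hp_top hs_add
  calc eLpNorm (fun x => |u x| ^ s * (v x * w x)) 1 μ
      ≤ eLpNorm (fun x => ‖u x‖ ^ s) (p / ENNReal.ofReal s) μ *
          eLpNorm (fun x => v x * w x) (p / 2) μ :=
        eLpNorm_smul_le_mul_eLpNorm (f := fun x => v x * w x) (φ := fun x => ‖u x‖ ^ s)
          (hv.mul hw) (hu.norm.aemeasurable.pow_const s).aestronglyMeasurable
    _ = eLpNorm u p μ ^ s * eLpNorm (fun x => v x * w x) (p / 2) μ := by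
        rw [eLpNorm_norm_rpow _ hs, ENNReal.div_mul_cancel hs0 ENNReal.ofReal_ne_top]
    _ ≤ eLpNorm u p μ ^ s * (eLpNorm v q μ * eLpNorm w r μ) := by
        gcongr
        exact eLpNorm_smul_le_mul_eLpNorm (f := w) (φ := v) hw hv

end WeightedIntegrals

section LineDerivatives

variable {E : Type*} [NormedAddCommGroup E] [NormedSpace ℝ E] [MeasurableSpace E] [BorelSpace E]
  {μ : Measure E}

lemma integrable_abs_rpow_mul_mul [SecondCountableTopology E] [μ.HasTemperateGrowth] {s : ℝ}
    (hs : 0 ≤ s) (u v w : 𝓢(E, ℝ)) : Integrable (fun x => |u x| ^ s * (v x * w x)) μ := by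
  have hvw : Integrable (fun x => v x * w x) μ := (v.memLp 2 μ).integrable_mul (w.memLp 2 μ)
  refine hvw.bdd_mul (c := SchwartzMap.seminorm ℝ 0 0 u ^ s)
    (u.continuous.abs.rpow_const fun _ => Or.inr hs).aestronglyMeasurable (.of_forall fun x => ?_)
  rw [Real.norm_of_nonneg (by positivity)]
  exact Real.rpow_le_rpow (abs_nonneg _) (u.norm_le_seminorm ℝ x) hs

variable [FiniteDimensional ℝ E] [μ.IsAddHaarMeasure]

lemma integral_abs_lineDeriv_rpow (v : 𝓢(E, ℝ)) (e : E) {p : ℝ} (hp : 2 < p) :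
    ∫ x, |(∂_{e} v) x| ^ p ∂μ =
      -∫ x, (p - 1) * (|(∂_{e} v) x| ^ (p - 2) * (v x * (∂_{e} (∂_{e} v)) x)) ∂μ := by
  have hs : 0 < p - 2 := sub_pos.2 hp
  set w : 𝓢(E, ℝ) := ∂_{e} v with hw
  have hderiv (x : E) : HasFDerivAt (fun x => |w x| ^ (p - 2) * w x)
      (((p - 2 + 1) * |w x| ^ (p - 2)) • fderiv ℝ w x) x :=
    (hasDerivAt_abs_rpow_mul_self hs (w x)).comp_hasFDerivAt x w.differentiableAt.hasFDerivAt
  have hv' (x : E) : fderiv ℝ v x e * (|w x| ^ (p - 2) * w x) = |w x| ^ (p - 2) * (w x * w x) := by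
    rw [← SchwartzMap.lineDerivOp_apply_eq_fderiv, ← hw, mul_left_comm]
  have hw' (x : E) : v x * fderiv ℝ (fun x => |w x| ^ (p - 2) * w x) x e =
      (p - 1) * (|w x| ^ (p - 2) * (v x * (∂_{e} w) x)) := by
    rw [(hderiv x).fderiv, SchwartzMap.lineDerivOp_apply_eq_fderiv e w]
    simp only [FunLike.coe_smul, Pi.smul_apply, smul_eq_mul]
    ring
  have hparts := integral_mul_fderiv_eq_neg_fderiv_mul_of_integrable (μ := μ) (f := v)
    (g := fun x => |w x| ^ (p - 2) * w x) (v := e)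
    (by simpa only [hv'] using integrable_abs_rpow_mul_mul hs.le w w w)
    (by simpa only [hw'] using (integrable_abs_rpow_mul_mul hs.le w v (∂_{e} w)).const_mul (p - 1))
    (by simpa only [mul_left_comm] using integrable_abs_rpow_mul_mul hs.le w v w)
    (fun x _ => v.differentiableAt) (fun x _ => (hderiv x).differentiableAt)
  simp only [hv', hw'] at hparts
  rw [hparts, neg_neg]
  congr with x
  rw [← abs_mul_abs_self (w x), ← sq, ← Real.rpow_two,
    ← Real.rpow_add_of_nonneg (abs_nonneg _) hs.le zero_le_two, sub_add_cancel]

lemma eLpNorm_lineDeriv_sq_le (v : 𝓢(E, ℝ)) (e : E) {p q r : ℝ≥0∞} (hp : 2 < p) (hp_top : p ≠ ⊤)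
    [ENNReal.HolderTriple q r (p / 2)] :
    eLpNorm (∂_{e} v : 𝓢(E, ℝ)) p μ ^ 2 ≤ ENNReal.ofReal (p.toReal - 1) *
      (eLpNorm v q μ * eLpNorm (∂_{e} (∂_{e} v) : 𝓢(E, ℝ)) r μ) := by
  have hp_real : 2 < p.toReal := by simpa using ENNReal.toReal_strict_mono hp_top hp
  set w : 𝓢(E, ℝ) := ∂_{e} v
  set z : 𝓢(E, ℝ) := ∂_{e} w
  set φ : E → ℝ := fun x => |w x| ^ (p.toReal - 2) * (v x * z x)
  refine sq_le_of_rpow_le_rpow_mul hp_real.le (w.memLp p μ).eLpNorm_ne_top ?_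
  calc eLpNorm w p μ ^ p.toReal
      = ENNReal.ofReal (∫ x, |w x| ^ p.toReal ∂μ) := by
        rw [(w.memLp p μ).eLpNorm_eq_integral_rpow_norm (zero_lt_two.trans hp).ne' hp_top,
          ENNReal.ofReal_rpow_of_nonneg (by positivity) (by positivity),
          Real.rpow_inv_rpow (by positivity) (by positivity)]
        rfl
    _ ≤ eLpNorm (fun x => (p.toReal - 1) * φ x) 1 μ := by
        rw [integral_abs_lineDeriv_rpow v e hp_real, eLpNorm_one_eq_lintegral_enorm]
        refine le_trans ?_ (enorm_integral_le_lintegral_enorm _)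
        rw [Real.enorm_eq_ofReal_abs]
        exact ENNReal.ofReal_le_ofReal (neg_le_abs _)
    _ = ENNReal.ofReal (p.toReal - 1) * eLpNorm φ 1 μ := by
        rw [← Real.enorm_of_nonneg (by linarith)]
        exact eLpNorm_const_smul (p.toReal - 1) φ 1 μ
    _ ≤ ENNReal.ofReal (p.toReal - 1) * (eLpNorm w p μ ^ (p.toReal - 2) *
          (eLpNorm v q μ * eLpNorm z r μ)) := by
        gcongr
        exact eLpNorm_norm_rpow_mul_mul_le w.continuous.aestronglyMeasurable
          v.continuous.aestronglyMeasurable z.continuous.aestronglyMeasurable hp hp_top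
    _ = _ := mul_left_comm _ _ _

end LineDerivatives

section DerivNorm

section Definition

variable {E F : Type*} [NormedAddCommGroup E] [NormedSpace ℝ E] [MeasurableSpace E]
  [NormedAddCommGroup F] [NormedSpace ℝ F]

/-- The real number `‖∇ⁿf‖_{L^p(μ)}`, where the `n`-th derivative at a point is measured by its
operator norm as a multilinear map. On `ℝ³` with Lebesgue measure this is `DN p n f`. -/
def derivNorm (p : ℝ≥0∞) (n : ℕ) (f : E → F) (μ : Measure E) : ℝ :=
  (eLpNorm (iteratedFDeriv ℝ n f) p μ).toReal

lemma derivNorm_nonneg (p : ℝ≥0∞) (n : ℕ) (f : E → F) (μ : Measure E) : 0 ≤ derivNorm p n f μ :=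
  ENNReal.toReal_nonneg

lemma derivNorm_zero (p : ℝ≥0∞) (f : E → F) (μ : Measure E) :
    derivNorm p 0 f μ = (eLpNorm f p μ).toReal :=
  congrArg ENNReal.toReal <|
    eLpNorm_congr_norm_ae <| .of_forall fun _ => norm_iteratedFDeriv_zero

end Definition

lemma norm_iteratedFDeriv_le_sum_norm_iteratedLineDeriv {E F ι : Type*}
    [NormedAddCommGroup E] [InnerProductSpace ℝ E] [NormedAddCommGroup F] [NormedSpace ℝ F]
    [Fintype ι] (b : OrthonormalBasis ι ℝ E) (f : 𝓢(E, F)) (n : ℕ) (x : E) :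
    ‖iteratedFDeriv ℝ n f x‖ ≤ ∑ L : Fin n → ι, ‖(∂^{fun j => b (L j)} f : 𝓢(E, F)) x‖ := by
  simpa only [SchwartzMap.iteratedLineDerivOp_eq_iteratedFDeriv] using
    opNorm_le_sum_norm_apply_orthonormalBasis b (iteratedFDeriv ℝ n f x)

variable {E F : Type*} [NormedAddCommGroup E] [InnerProductSpace ℝ E] [FiniteDimensional ℝ E]
  [MeasurableSpace E] [BorelSpace E] [NormedAddCommGroup F] [NormedSpace ℝ F] {μ : Measure E}
  {ι : Type*} [Fintype ι]

variable [μ.HasTemperateGrowth]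

lemma memLp_iteratedFDeriv (f : 𝓢(E, F)) (n : ℕ) (p : ℝ≥0∞) :
    MemLp (iteratedFDeriv ℝ n f) p μ :=
  (memLp_finsetSum _ fun _ _ => (SchwartzMap.memLp _ p μ).norm).mono'
    (aestronglyMeasurable_iteratedFDeriv f n)
    (.of_forall (norm_iteratedFDeriv_le_sum_norm_iteratedLineDeriv (stdOrthonormalBasis ℝ E) f n))

lemma ofReal_derivNorm (f : 𝓢(E, F)) (n : ℕ) (p : ℝ≥0∞) :
    ENNReal.ofReal (derivNorm p n f μ) = eLpNorm (iteratedFDeriv ℝ n f) p μ :=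
  ENNReal.ofReal_toReal (memLp_iteratedFDeriv f n p).eLpNorm_ne_top

lemma toReal_eLpNorm_iteratedLineDeriv_le_derivNorm (b : OrthonormalBasis ι ℝ E) (f : 𝓢(E, F))
    (p : ℝ≥0∞) {n : ℕ} (L : Fin n → ι) :
    (eLpNorm (∂^{fun j => b (L j)} f : 𝓢(E, F)) p μ).toReal ≤ derivNorm p n f μ := by
  refine ENNReal.toReal_mono (memLp_iteratedFDeriv f n p).eLpNorm_ne_top (eLpNorm_mono fun x => ?_)
  rw [SchwartzMap.iteratedLineDerivOp_eq_iteratedFDeriv]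
  simpa using (iteratedFDeriv ℝ n f x).le_opNorm fun j => b (L j)

lemma derivNorm_le_sum_toReal_eLpNorm_iteratedLineDeriv (b : OrthonormalBasis ι ℝ E)
    (f : 𝓢(E, F)) {p : ℝ≥0∞} (hp : 1 ≤ p) (n : ℕ) :
    derivNorm p n f μ ≤
      ∑ L : Fin n → ι, (eLpNorm (∂^{fun j => b (L j)} f : 𝓢(E, F)) p μ).toReal := by
  have hfin (L : Fin n → ι) : eLpNorm (∂^{fun j => b (L j)} f : 𝓢(E, F)) p μ ≠ ⊤ :=
    (SchwartzMap.memLp _ p μ).eLpNorm_ne_top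
  rw [← ENNReal.toReal_sum fun L _ => hfin L]
  refine ENNReal.toReal_mono (ENNReal.sum_ne_top.2 fun L _ => hfin L) ?_
  calc eLpNorm (iteratedFDeriv ℝ n f) p μ
      ≤ eLpNorm (∑ L : Fin n → ι, fun x => ‖(∂^{fun j => b (L j)} f : 𝓢(E, F)) x‖) p μ :=
        eLpNorm_mono_real fun x => by
          simpa only [Finset.sum_apply] using
            norm_iteratedFDeriv_le_sum_norm_iteratedLineDeriv b f n x
    _ ≤ ∑ L : Fin n → ι, eLpNorm (fun x => ‖(∂^{fun j => b (L j)} f : 𝓢(E, F)) x‖) p μ :=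
        eLpNorm_sum_le (fun L _ => (SchwartzMap.continuous _).norm.aestronglyMeasurable) hp
    _ = ∑ L : Fin n → ι, eLpNorm (∂^{fun j => b (L j)} f : 𝓢(E, F)) p μ :=
        Finset.sum_congr rfl fun L _ => eLpNorm_norm _

lemma eLpNorm_norm_iteratedFDeriv_mul_le {G : Type*} [NormedAddCommGroup G] [NormedSpace ℝ G]
    (f : 𝓢(E, F)) (g : 𝓢(E, G)) (a b : ℕ) {p q r : ℝ≥0∞} [ENNReal.HolderTriple q r p] :
    eLpNorm (fun x => ‖iteratedFDeriv ℝ a f x‖ * ‖iteratedFDeriv ℝ b g x‖) p μ ≤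
      ENNReal.ofReal (derivNorm q a f μ * derivNorm r b g μ) := by
  rw [ENNReal.ofReal_mul (derivNorm_nonneg _ _ _ _), ofReal_derivNorm, ofReal_derivNorm,
    ← eLpNorm_norm (iteratedFDeriv ℝ a f), ← eLpNorm_norm (iteratedFDeriv ℝ b g)]
  exact eLpNorm_smul_le_mul_eLpNorm (f := fun x => ‖iteratedFDeriv ℝ b g x‖)
    (φ := fun x => ‖iteratedFDeriv ℝ a f x‖) (aestronglyMeasurable_iteratedFDeriv g b).norm
    (aestronglyMeasurable_iteratedFDeriv f a).norm

end DerivNorm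

section Interpolation

variable {E : Type*} [NormedAddCommGroup E] [InnerProductSpace ℝ E] [FiniteDimensional ℝ E]
  [MeasurableSpace E] [BorelSpace E] {μ : Measure E} [μ.IsAddHaarMeasure]

lemma toReal_eLpNorm_iteratedLineDeriv_succ_sq_le {ι : Type*} [Fintype ι]
    (b : OrthonormalBasis ι ℝ E) (f : 𝓢(E, ℝ)) {n : ℕ} (L : Fin (n + 1) → ι) {p q r : ℝ≥0∞}
    (hp : 2 < p) (hp_top : p ≠ ⊤) [ENNReal.HolderTriple q r (p / 2)] :
    (eLpNorm (∂^{fun j => b (L j)} f : 𝓢(E, ℝ)) p μ).toReal ^ 2 ≤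
      (p.toReal - 1) * (derivNorm q n f μ * derivNorm r (n + 2) f μ) := by
  have hp_real : 2 < p.toReal := by simpa using ENNReal.toReal_strict_mono hp_top hp
  have hp1 : 0 ≤ p.toReal - 1 := by linarith
  set v : 𝓢(E, ℝ) := ∂^{fun j => b (Fin.tail L j)} f
  set e := b (L 0)
  have hv1 : (∂^{fun j => b (L j)} f : 𝓢(E, ℝ)) = ∂_{e} v :=
    LineDeriv.iteratedLineDerivOp_succ_left _ _
  have hv2 : (∂^{fun j => b ((Fin.cons (L 0) L : Fin (n + 2) → _) j)} f : 𝓢(E, ℝ)) =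
      ∂_{e} (∂_{e} v) := by
    rw [LineDeriv.iteratedLineDerivOp_succ_left, ← hv1]; rfl
  have hle := ENNReal.toReal_mono (ENNReal.mul_ne_top ENNReal.ofReal_ne_top
    (ENNReal.mul_ne_top (v.memLp q μ).eLpNorm_ne_top
      (SchwartzMap.memLp (∂_{e} (∂_{e} v)) r μ).eLpNorm_ne_top))
    (eLpNorm_lineDeriv_sq_le (μ := μ) (q := q) (r := r) v e hp hp_top)
  rw [ENNReal.toReal_pow, ENNReal.toReal_mul, ENNReal.toReal_mul,
    ENNReal.toReal_ofReal hp1] at hle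
  rw [hv1]
  refine hle.trans (mul_le_mul_of_nonneg_left ?_ hp1)
  gcongr
  · exact derivNorm_nonneg q n f μ
  · exact toReal_eLpNorm_iteratedLineDeriv_le_derivNorm b f q _
  · rw [← hv2]
    exact toReal_eLpNorm_iteratedLineDeriv_le_derivNorm b f r _

lemma derivNorm_succ_sq_le (f : 𝓢(E, ℝ)) (n : ℕ) {p q r : ℝ≥0∞} (hp : 2 < p) (hp_top : p ≠ ⊤)
    [ENNReal.HolderTriple q r (p / 2)] :
    derivNorm p (n + 1) f μ ^ 2 ≤ finrank ℝ E ^ (2 * (n + 1)) * (p.toReal - 1) *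
      (derivNorm q n f μ * derivNorm r (n + 2) f μ) := by
  set b := stdOrthonormalBasis ℝ E
  set M := (p.toReal - 1) * (derivNorm q n f μ * derivNorm r (n + 2) f μ)
  calc derivNorm p (n + 1) f μ ^ 2
      ≤ (∑ L : Fin (n + 1) → Fin (finrank ℝ E),
          (eLpNorm (∂^{fun j => b (L j)} f : 𝓢(E, ℝ)) p μ).toReal) ^ 2 := by
        gcongr
        · exact derivNorm_nonneg _ _ _ _
        · exact derivNorm_le_sum_toReal_eLpNorm_iteratedLineDeriv b f (one_le_two.trans hp.le) _
    _ ≤ Fintype.card (Fin (n + 1) → Fin (finrank ℝ E)) * ∑ L : Fin (n + 1) → Fin (finrank ℝ E),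
          (eLpNorm (∂^{fun j => b (L j)} f : 𝓢(E, ℝ)) p μ).toReal ^ 2 := sq_sum_le_card_mul_sum_sq
    _ ≤ Fintype.card (Fin (n + 1) → Fin (finrank ℝ E)) *
          ∑ _L : Fin (n + 1) → Fin (finrank ℝ E), M := by
        gcongr with L
        exact toReal_eLpNorm_iteratedLineDeriv_succ_sq_le b f L hp hp_top
    _ = finrank ℝ E ^ (2 * (n + 1)) * M := by
        rw [Finset.sum_const, nsmul_eq_mul, Finset.card_univ, Fintype.card_fun, Fintype.card_fin,
          Fintype.card_fin, Nat.cast_pow, pow_mul']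
        ring
    _ = _ := (mul_assoc _ _ _).symm

variable {p : ℝ≥0∞}

lemma exists_derivNorm_succ_sq_le (hp : 2 ≤ p) (hp_top : p ≠ ⊤) (m : ℕ) :
    ∃ K : ℝ, 1 ≤ K ∧ ∀ (f : 𝓢(E, ℝ)) (i n : ℕ), i + 1 < m → n + 1 ≤ m →
      derivNorm (p * m / ↑(i + 1)) (n + 1) f μ ^ 2 ≤
        K * (derivNorm (p * m / i) n f μ * derivNorm (p * m / ↑(i + 2)) (n + 2) f μ) := by
  have hp_real : 2 ≤ p.toReal := by simpa using ENNReal.toReal_mono hp_top hp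
  have hd : (1 : ℝ) ≤ finrank ℝ E + 1 := by simp
  refine ⟨(finrank ℝ E + 1) ^ (2 * m) * (p.toReal * (m + 1)), one_le_mul_of_one_le_of_one_le
    (one_le_pow₀ hd) (one_le_mul_of_one_le_of_one_le (by linarith) (by simp)), ?_⟩
  intro f i n hi hn
  have hm : (m : ℝ≥0∞) ≠ 0 := by exact_mod_cast (by omega : m ≠ 0)
  have hpm : p * m ≠ 0 := mul_ne_zero (zero_lt_two.trans_le hp).ne' hm
  have hpm_top : p * m ≠ ⊤ := ENNReal.mul_ne_top hp_top (ENNReal.natCast_ne_top m)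
  have hs : 2 < p * m / ↑(i + 1) := by
    rw [ENNReal.lt_div_iff_mul_lt (by simp) (by simp)]
    calc (2 : ℝ≥0∞) * ↑(i + 1) < 2 * m :=
          (ENNReal.mul_lt_mul_iff_right two_ne_zero ENNReal.ofNat_ne_top).2 (by exact_mod_cast hi)
      _ ≤ p * m := by gcongr
  have hs_le : (p * m / ↑(i + 1)).toReal - 1 ≤ p.toReal * (m + 1) := by
    rw [ENNReal.toReal_div, ENNReal.toReal_mul, ENNReal.toReal_natCast, ENNReal.toReal_natCast]
    have hdiv : p.toReal * m / ↑(i + 1) ≤ p.toReal * m :=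
      div_le_self (by positivity) (by simp)
    linarith
  have hholder : ENNReal.HolderTriple (p * m / i) (p * m / ↑(i + 2)) (p * m / ↑(i + 1) / 2) :=
    holderTriple_div_div hpm hpm_top (by simp) (by simp) (by push_cast; ring)
  refine (derivNorm_succ_sq_le (q := p * m / i) (r := p * m / ↑(i + 2)) f n hs
    (ENNReal.div_ne_top hpm_top (by simp))).trans ?_
  have hnonneg := mul_nonneg (derivNorm_nonneg (p * m / i) n f μ)
    (derivNorm_nonneg (p * m / ↑(i + 2)) (n + 2) f μ)
  gcongr ?_ * _
  calc (finrank ℝ E : ℝ) ^ (2 * (n + 1)) * ((p * m / ↑(i + 1)).toReal - 1)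
      ≤ finrank ℝ E ^ (2 * (n + 1)) * (p.toReal * (m + 1)) := by gcongr
    _ ≤ (finrank ℝ E + 1) ^ (2 * (n + 1)) * (p.toReal * (m + 1)) := by gcongr; simp
    _ ≤ (finrank ℝ E + 1) ^ (2 * m) * (p.toReal * (m + 1)) := by gcongr

lemma exists_derivNorm_mul_derivNorm_le (hp : 2 ≤ p) (hp_top : p ≠ ⊤) {m : ℕ} (hm : m ≠ 0) :
    ∃ K > (0 : ℝ), ∀ (f g : 𝓢(E, ℝ)) (i : ℕ), i ≤ m →
      derivNorm (p * m / i) (i + 1) f μ * derivNorm (p * m / ↑(m - i)) (m - i) g μ ≤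
        K * (derivNorm ⊤ 1 f μ * derivNorm p m g μ +
          derivNorm p (m + 1) f μ * derivNorm ⊤ 0 g μ) := by
  obtain ⟨K, hK, hinterp⟩ := exists_derivNorm_succ_sq_le (μ := μ) hp hp_top m
  have hKm : 0 < (K ^ 2) ^ m ^ 2 := pow_pos (pow_pos (zero_lt_one.trans_le hK) 2) _
  refine ⟨(K ^ 2) ^ m ^ 2, hKm, fun f g i hi => ?_⟩
  set c : ℕ → ℝ := fun i =>
    derivNorm (p * m / i) (i + 1) f μ * derivNorm (p * m / ↑(m - i)) (m - i) g μ with hc_def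
  have hc (i : ℕ) : 0 ≤ c i := mul_nonneg (derivNorm_nonneg _ _ _ _) (derivNorm_nonneg _ _ _ _)
  have hlogconvex (i : ℕ) (hi : i + 1 < m) : c (i + 1) ^ 2 ≤ K ^ 2 * (c i * c (i + 2)) := by
    have hf := hinterp f i (i + 1) hi (by omega)
    have hg := hinterp g (m - (i + 2)) (m - (i + 2)) (by omega) (by omega)
    rw [show m - (i + 2) + 1 = m - (i + 1) by omega, show m - (i + 2) + 2 = m - i by omega] at hg
    calc c (i + 1) ^ 2 = _ := mul_pow _ _ _
      _ ≤ _ := mul_le_mul hf hg (sq_nonneg _) ((sq_nonneg _).trans hf)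
      _ = K ^ 2 * (c i * c (i + 2)) := by simp only [hc_def]; ring
  have hpm : p * m / m = p := ENNReal.mul_div_cancel_right (by simpa) (by simp)
  have hpm_top : p * m / 0 = ⊤ :=
    ENNReal.div_zero (mul_ne_zero (zero_lt_two.trans_le hp).ne' (by simpa))
  have hc0 : c 0 = derivNorm ⊤ 1 f μ * derivNorm p m g μ := by simp [hc_def, hpm, hpm_top]
  have hcm : c m = derivNorm p (m + 1) f μ * derivNorm ⊤ 0 g μ := by simp [hc_def, hpm, hpm_top]
  rw [← hc0, ← hcm]
  exact (le_pow_mul_max_of_sq_succ_le_mul hc (one_le_pow₀ hK) hlogconvex hi).trans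
    (mul_le_mul_of_nonneg_left (max_le_add_of_nonneg (hc 0) (hc m)) hKm.le)

end Interpolation

section Commutator

variable {E : Type*} [NormedAddCommGroup E] [InnerProductSpace ℝ E] [FiniteDimensional ℝ E]
  [MeasurableSpace E] [BorelSpace E] {p : ℝ≥0∞}

lemma exists_eLpNorm_norm_iteratedFDeriv_mul_le (μ : Measure E) [μ.IsAddHaarMeasure] (hp : 2 ≤ p)
    (hp_top : p ≠ ⊤) (m : ℕ) :
    ∃ K > (0 : ℝ), ∀ (f g : 𝓢(E, ℝ)) (i : ℕ), i ≤ m →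
      eLpNorm (fun x => ‖iteratedFDeriv ℝ (i + 1) f x‖ * ‖iteratedFDeriv ℝ (m - i) g x‖) p μ ≤
        ENNReal.ofReal (K * (derivNorm ⊤ 1 f μ * derivNorm p m g μ +
          derivNorm p (m + 1) f μ * derivNorm ⊤ 0 g μ)) := by
  rcases eq_or_ne m 0 with rfl | hm
  · refine ⟨1, one_pos, fun f g i hi => ?_⟩
    obtain rfl : i = 0 := Nat.le_zero.1 hi
    refine (eLpNorm_norm_iteratedFDeriv_mul_le f g 1 0 (q := ⊤) (r := p)).trans
      (ENNReal.ofReal_le_ofReal ?_)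
    rw [one_mul]
    exact le_add_of_nonneg_right (mul_nonneg (derivNorm_nonneg _ _ _ _) (derivNorm_nonneg _ _ _ _))
  · obtain ⟨K, hK, hle⟩ := exists_derivNorm_mul_derivNorm_le (μ := μ) hp hp_top hm
    refine ⟨K, hK, fun f g i hi => ?_⟩
    have hholder : ENNReal.HolderTriple (p * m / i) (p * m / ↑(m - i)) p := by
      have hp0 : p * m ≠ 0 := mul_ne_zero (zero_lt_two.trans_le hp).ne' (by simpa)
      have hadd : (i : ℝ≥0∞) + ↑(m - i) = m := by exact_mod_cast Nat.add_sub_of_le hi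
      simpa [ENNReal.mul_div_cancel_right, hm] using
        holderTriple_div hp0 (ENNReal.mul_ne_top hp_top (by simp)) hadd
    exact (eLpNorm_norm_iteratedFDeriv_mul_le f g (i + 1) (m - i)).trans
      (ENNReal.ofReal_le_ofReal (hle f g i hi))

theorem commutator_estimate_general (μ : Measure E) [μ.IsAddHaarMeasure] (hp : 2 ≤ p)
    (hp_top : p ≠ ⊤) (k : ℕ) (hk : 1 ≤ k) :
    ∃ C > (0 : ℝ), ∀ f g : 𝓢(E, ℝ),
      (eLpNorm (fun x =>
          iteratedFDeriv ℝ k (fun y => f y * g y) x - f x • iteratedFDeriv ℝ k g x) p μ).toReal ≤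
        C * derivNorm ⊤ 1 f μ * derivNorm p (k - 1) g μ +
          C * derivNorm p k f μ * (eLpNorm g ⊤ μ).toReal := by
  obtain ⟨m, rfl⟩ := Nat.exists_eq_add_of_le' hk
  obtain ⟨K, hK, hterm⟩ := exists_eLpNorm_norm_iteratedFDeriv_mul_le μ hp hp_top m
  set S : ℝ := ∑ i ∈ Finset.range (m + 1), ((m + 1).choose (i + 1) : ℝ)
  have hS : 0 < S := Finset.sum_pos (fun i hi => by
    exact_mod_cast Nat.choose_pos (Nat.succ_le_of_lt (Finset.mem_range.1 hi))) (by simp)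
  refine ⟨S * K, mul_pos hS hK, fun f g => ?_⟩
  set A := derivNorm ⊤ 1 f μ * derivNorm p m g μ + derivNorm p (m + 1) f μ * derivNorm ⊤ 0 g μ
    with hA
  have hA0 : 0 ≤ A := by simp only [hA, derivNorm]; positivity
  have hle := calc
    eLpNorm (fun x => iteratedFDeriv ℝ (m + 1) (fun y => f y * g y) x -
          f x • iteratedFDeriv ℝ (m + 1) g x) p μ
      ≤ _ := eLpNorm_iteratedFDeriv_smul_sub_smul_le (one_le_two.trans hp) f g m
    _ ≤ ∑ i ∈ Finset.range (m + 1), (m + 1).choose (i + 1) * ENNReal.ofReal (K * A) := by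
        gcongr with i hi
        exact hterm f g i (Finset.mem_range_succ_iff.1 hi)
    _ = ENNReal.ofReal (S * (K * A)) := by
        rw [← Finset.sum_mul, ENNReal.ofReal_mul hS.le,
          ENNReal.ofReal_sum_of_nonneg fun i _ => Nat.cast_nonneg _]
        simp
  rw [Nat.add_sub_cancel, ← derivNorm_zero ⊤ g μ]
  exact (ENNReal.toReal_le_of_le_ofReal (by positivity) hle).trans_eq (by rw [hA]; ring)

end Commutator

/-- **Commutator estimate.** For `k ≥ 1` there is `C > 0`, depending only on `k`,
such that for all Schwartz functions `f, g` on `ℝ³`,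
`‖[∇ᵏ, f]g‖_{L²} ≤ C‖∇f‖_{L^∞}‖∇^{k−1}g‖_{L²} + C‖∇ᵏf‖_{L²}‖g‖_{L^∞}`, where
`[∇ᵏ, f]g = ∇ᵏ(fg) − f∇ᵏg`. -/
theorem commutator_estimate (k : ℕ) (hk : 1 ≤ k) :
    ∃ C > (0 : ℝ), ∀ f g : SchwartzMap E3 ℝ,
      (eLpNorm (fun x : E3 =>
          iteratedFDeriv ℝ k (fun y => f y * g y) x - f x • iteratedFDeriv ℝ k (⇑g) x)
        2 volume).toReal ≤
        C * DN ⊤ 1 (⇑f) * DN 2 (k - 1) (⇑g) + C * DN 2 k (⇑f) * LpN ⊤ (⇑g) := by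
  exact commutator_estimate_general volume le_rfl ENNReal.ofNat_ne_top k hk
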